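/- arXiv:2201.08895 — 2 statements merged into one kernel-verified Lean document; each statement's English description precedes it below -/
import Mathlib

section
/- For every k ∈ ℕ and every δ ∈ [0,1] there exists ε > 0 such that the open interval (δ − ε, δ) contains no element of kcnfs-σ-spectrum; that is, the spectral gap below δ, spectral-gap_k(δ) := max{ε : (δ − ε, δ) ∩ kcnfs-σ-spectrum = ∅}, is positive. -/
/-!
The falsification probabilities `1 - σ(φ)` of `k`CNF formulas form a well-ordered set of reals,
by induction on `k`; the gap below `δ` reaches down to `1 - m`, where `m` is the least
falsification probability exceeding `1 - δ`.

For the induction step it suffices to treat the falsification probabilities below a fixed `b < 1`,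
since in a strictly decreasing sequence all terms but the first are below such a bound.
Pairwise variable-disjoint clauses fail independently, each with probability at least
`2 ^ (-(k + 1))`, so a formula falsified with probability at most `b` has only boundedly many of
them. The variables of a maximal family of such clauses form a set `A` of bounded size meeting
every clause (`exists_hitting_or_satOn_le`). Each assignment of `A` leaves a `k`CNF formula, and
by the law of total probability (`satOn_mul_two_pow`) the falsification probability is the average
of those of the residual formulas. Up to a fixed factor it therefore lies in the additive monoid
generated by the falsification probabilities of `k`CNF formulas, and a monoid generated by a
well-ordered set of nonnegative reals is again well-ordered (`Set.IsPWO.addSubmonoid_closure`).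
-/


open Finset

open scoped Classical

/-- A literal is a propositional variable (a natural number) together with a sign. -/
abbrev PLit := ℕ × Bool

/-- A clause is a finite set of literals. -/
abbrev PClause := Finset PLit

/-- A CNF formula is a finite set of clauses. -/
abbrev PCnf := Finset PClause

/-- A clause is valid if it contains no variable together with its negation. -/
def clauseValid (c : PClause) : Prop := ∀ v : ℕ, ¬((v, true) ∈ c ∧ (v, false) ∈ c)

/-- The variables occurring in a clause. -/
def clauseVars (c : PClause) : Finset ℕ := c.image Prod.fst

/-- A CNF formula is valid if all of its clauses are. -/
def cnfValid (φ : PCnf) : Prop := ∀ c ∈ φ, clauseValid c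

/-- The variables occurring in a CNF formula. -/
def cnfVars (φ : PCnf) : Finset ℕ := φ.sup clauseVars

/-- `φ` is a `k`CNF formula: all clauses are valid and have at most `k` literals. -/
def IsKCnf (k : ℕ) (φ : PCnf) : Prop := cnfValid φ ∧ ∀ c ∈ φ, c.card ≤ k

/-- An assignment is represented by the finite set `S` of variables set to true;
`litSat S l` says that the literal `l` is made true. -/
def litSat (S : Finset ℕ) (l : PLit) : Prop := if l.2 then l.1 ∈ S else l.1 ∉ S

/-- A clause is satisfied if it contains a literal made true. -/
def clauseSat (S : Finset ℕ) (c : PClause) : Prop := ∃ l ∈ c, litSat S l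

/-- A CNF formula is satisfied if all of its clauses are. -/
def cnfSat (S : Finset ℕ) (φ : PCnf) : Prop := ∀ c ∈ φ, clauseSat S c

/-- The satisfaction probability `σ(φ)`: the fraction of assignments
`β : vars(φ) → {0,1}` (represented as subsets of `cnfVars φ`) satisfying `φ`. -/
noncomputable def satProb (φ : PCnf) : ℝ :=
  ((cnfVars φ).powerset.filter (fun S => cnfSat S φ)).card / 2 ^ (cnfVars φ).card

/-- The set of satisfaction probabilities of `k`CNF formulas. -/
def kcnfSpectrum (k : ℕ) : Set ℝ := {x | ∃ φ : PCnf, IsKCnf k φ ∧ satProb φ = x}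

/-- A packing: a set of pairwise variable-disjoint clauses. -/
def IsPacking (π : PCnf) : Prop :=
  ∀ c ∈ π, ∀ c' ∈ π, c ≠ c' → Disjoint (clauseVars c) (clauseVars c')

/-- A sunflower with core `c`. -/
def IsSunflower (ψ : PCnf) (c : PClause) : Prop :=
  (∀ e ∈ ψ, c ⊆ e) ∧
    ∀ e ∈ ψ, ∀ e' ∈ ψ, e ≠ e' → clauseVars e ∩ clauseVars e' = clauseVars c

/-- The link of a clause `c` in `φ`: all superclauses of `c` in `φ`. -/
noncomputable def link (φ : PCnf) (c : PClause) : PCnf := φ.filter (fun e => c ⊆ e)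

/-- The literal `l` is made true by the assignment `β : V → {0,1}` represented by `S ⊆ V`. -/
def litTrue (V S : Finset ℕ) (l : PLit) : Prop :=
  l.1 ∈ V ∧ (if l.2 then l.1 ∈ S else l.1 ∉ S)

/-- The literal `l` is made false by the assignment `β : V → {0,1}` represented by `S ⊆ V`. -/
def litFalse (V S : Finset ℕ) (l : PLit) : Prop :=
  l.1 ∈ V ∧ ¬(if l.2 then l.1 ∈ S else l.1 ∉ S)

/-- The restriction `φ|_β` of `φ` to the assignment `β : V → {0,1}` represented by
`S ⊆ V`: remove every clause containing a literal made true by `β`, delete from the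
remaining clauses all literals made false by `β`, and add the unit clause `{v}` for
each `v ∈ S` and the unit clause `{¬v}` for each `v ∈ V \ S`. -/
noncomputable def restrict (φ : PCnf) (V S : Finset ℕ) : PCnf :=
  ((φ.filter fun c => ¬ ∃ l ∈ c, litTrue V S l).image fun c =>
      c.filter fun l => ¬ litFalse V S l)
    ∪ S.image (fun v => ({(v, true)} : PClause))
    ∪ (V \ S).image (fun v => ({(v, false)} : PClause))

/-! ### Satisfaction probabilities and conditioning -/

/-- The probability that a uniformly random subset of `V` satisfies `φ`. -/
noncomputable def satOn (V : Finset ℕ) (φ : PCnf) : ℝ :=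
  (#{S ∈ V.powerset | cnfSat S φ} : ℝ) / 2 ^ #V

/-- The formula on the variables outside `A` that remains once the variables in `A` are set
according to `T ⊆ A`. Unlike `restrict`, no unit clauses recording `T` are added. -/
noncomputable def residualCnf (φ : PCnf) (A T : Finset ℕ) : PCnf :=
  {c ∈ φ | ¬ ∃ l ∈ c, l.1 ∈ A ∧ litSat T l}.image fun c => c.filter fun l => l.1 ∉ A

lemma satOn_nonneg (V : Finset ℕ) (φ : PCnf) : 0 ≤ satOn V φ := by
  unfold satOn; positivity

lemma satOn_le_one (V : Finset ℕ) (φ : PCnf) : satOn V φ ≤ 1 := by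
  unfold satOn
  rw [div_le_one (by positivity)]
  have := card_filter_le V.powerset (fun S => cnfSat S φ)
  rw [card_powerset] at this
  exact_mod_cast this

lemma satOn_mono (V : Finset ℕ) {φ ψ : PCnf}
    (h : ∀ S ⊆ V, cnfSat S φ → cnfSat S ψ) : satOn V φ ≤ satOn V ψ := by
  unfold satOn
  gcongr with S hS
  exact h S (mem_powerset.1 hS)

lemma satOn_eq_zero (V : Finset ℕ) {φ : PCnf} (h : ∅ ∈ φ) : satOn V φ = 0 := by
  unfold satOn
  rw [filter_false_of_mem]
  · simp
  · intro S _ hS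
    obtain ⟨l, hl, _⟩ := hS ∅ h
    simp at hl

lemma mem_clauseVars {c : PClause} {l : PLit} (h : l ∈ c) : l.1 ∈ clauseVars c :=
  mem_image_of_mem _ h

lemma clauseVars_subset {φ : PCnf} {c : PClause} (h : c ∈ φ) : clauseVars c ⊆ cnfVars φ :=
  le_sup (f := clauseVars) h

lemma cnfVars_subset_iff {φ : PCnf} {V : Finset ℕ} :
    cnfVars φ ⊆ V ↔ ∀ c ∈ φ, ∀ l ∈ c, l.1 ∈ V := by
  unfold cnfVars
  simp only [Finset.sup_le_iff, clauseVars, image_subset_iff]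

lemma litSat_congr {S T : Finset ℕ} {l : PLit} (h : l.1 ∈ S ↔ l.1 ∈ T) :
    litSat S l ↔ litSat T l := by
  unfold litSat; rw [h]

lemma cnfSat_residual (φ : PCnf) (A S : Finset ℕ) :
    cnfSat (S \ A) (residualCnf φ A (S ∩ A)) ↔ cnfSat S φ := by
  have h1 : ∀ l : PLit, l.1 ∈ A → (litSat (S ∩ A) l ↔ litSat S l) := fun l hl =>
    litSat_congr (by simp [hl])
  have h2 : ∀ l : PLit, l.1 ∉ A → (litSat (S \ A) l ↔ litSat S l) := fun l hl =>
    litSat_congr (by simp [hl])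
  constructor
  · intro h c hc
    by_cases hA : ∃ l ∈ c, l.1 ∈ A ∧ litSat (S ∩ A) l
    · obtain ⟨l, hl, hlA, hs⟩ := hA
      exact ⟨l, hl, (h1 l hlA).1 hs⟩
    · obtain ⟨l, hl, hs⟩ := h _ (mem_image_of_mem _ (mem_filter.2 ⟨hc, hA⟩))
      rw [mem_filter] at hl
      exact ⟨l, hl.1, (h2 l hl.2).1 hs⟩
  · intro h d hd
    obtain ⟨c, hc, rfl⟩ := mem_image.1 hd
    rw [mem_filter] at hc
    obtain ⟨l, hl, hs⟩ := h c hc.1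
    have hlA : l.1 ∉ A := fun hlA => hc.2 ⟨l, hl, hlA, (h1 l hlA).2 hs⟩
    exact ⟨l, mem_filter.2 ⟨hl, hlA⟩, (h2 l hlA).2 hs⟩

/-- The law of total probability, conditioning on the values of the variables in `A`. -/
lemma satOn_mul_two_pow {V A : Finset ℕ} (hA : A ⊆ V) (φ : PCnf) :
    satOn V φ * 2 ^ #A = ∑ T ∈ A.powerset, satOn (V \ A) (residualCnf φ A T) := by
  have hcard : #{S ∈ V.powerset | cnfSat S φ}
      = ∑ T ∈ A.powerset, #{S ∈ (V \ A).powerset | cnfSat S (residualCnf φ A T)} := by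
    rw [card_eq_sum_card_fiberwise (f := fun S => S ∩ A) (t := A.powerset)
      (fun S _ => by simp)]
    refine sum_congr rfl fun T hT => ?_
    rw [mem_powerset] at hT
    refine card_bij' (fun S _ => S \ A) (fun S _ => S ∪ T) ?_ ?_ ?_ ?_
    · intro S hS
      simp only [mem_filter, mem_powerset] at hS ⊢
      obtain ⟨⟨hSV, hs⟩, rfl⟩ := hS
      exact ⟨sdiff_subset_sdiff hSV le_rfl, (cnfSat_residual φ A S).2 hs⟩
    · intro S hS
      simp only [mem_filter, mem_powerset] at hS ⊢
      have e1 : (S ∪ T) ∩ A = T := by grind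
      have e2 : (S ∪ T) \ A = S := by grind
      refine ⟨⟨by grind, ?_⟩, e1⟩
      rw [← cnfSat_residual φ A, e1, e2]
      exact hS.2
    · intro S hS
      simp only [mem_filter, mem_powerset] at hS
      grind
    · intro S hS
      simp only [mem_filter, mem_powerset] at hS
      grind
  unfold satOn
  rw [← sum_div, hcard, ← card_sdiff_add_card_eq_card hA, pow_add]
  push_cast
  field_simp

lemma cnfVars_residual_subset {V A T : Finset ℕ} {φ : PCnf} (h : cnfVars φ ⊆ V) :
    cnfVars (residualCnf φ A T) ⊆ V \ A := by
  rw [cnfVars_subset_iff] at h ⊢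
  intro d hd l hl
  obtain ⟨c, hc, rfl⟩ := mem_image.1 hd
  rw [mem_filter] at hc hl
  exact mem_sdiff.2 ⟨h c hc.1 l hl.1, hl.2⟩

/-- Every clause loses a literal when the variables of a hitting set are set. -/
lemma IsKCnf.residualCnf_of_hits {k : ℕ} {φ : PCnf} (h : IsKCnf (k + 1) φ) {A : Finset ℕ}
    (hA : ∀ c ∈ φ, ∃ l ∈ c, l.1 ∈ A) (T : Finset ℕ) : IsKCnf k (residualCnf φ A T) := by
  refine ⟨fun d hd v hv => ?_, fun d hd => ?_⟩ <;> obtain ⟨c, hc, rfl⟩ := mem_image.1 hd <;>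
    rw [mem_filter] at hc
  · exact h.1 c hc.1 v ⟨(mem_filter.1 hv.1).1, (mem_filter.1 hv.2).1⟩
  · obtain ⟨l, hl, hlA⟩ := hA c hc.1
    have : #{l ∈ c | l.1 ∉ A} < #c := card_lt_card (filter_ssubset.2 ⟨l, hl, by simpa using hlA⟩)
    have := h.2 c hc.1
    omega

/-! ### Hitting sets and disjoint clauses -/

/-- Either few variables meet all clauses, or `φ` contains many pairwise variable-disjoint
clauses, each of which independently fails with probability at least `2⁻ᵏ`. -/
lemma exists_hitting_or_satOn_le (k m : ℕ) : ∀ (φ : PCnf) (V : Finset ℕ), IsKCnf k φ →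
    cnfVars φ ⊆ V →
    (∃ A ⊆ V, #A ≤ m * k ∧ ∀ c ∈ φ, ∃ l ∈ c, l.1 ∈ A) ∨ satOn V φ ≤ (1 - (1 / 2) ^ k) ^ m := by
  induction m with
  | zero => intro φ V _ _; right; simpa using satOn_le_one V φ
  | succ m ih =>
    intro φ V hφ hV
    rcases φ.eq_empty_or_nonempty with rfl | ⟨c, hc⟩
    · exact Or.inl ⟨∅, by simp⟩
    set A := clauseVars c with hAdef
    have hAV : A ⊆ V := (clauseVars_subset hc).trans hV
    have hAk : #A ≤ k := card_image_le.trans (hφ.2 c hc)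
    set ψ : PCnf := {d ∈ φ | ∀ l ∈ d, l.1 ∉ A} with hψdef
    have hψφ : ψ ⊆ φ := filter_subset _ _
    have hψV : cnfVars ψ ⊆ V \ A := by
      rw [cnfVars_subset_iff] at hV ⊢
      intro d hd l hl
      rw [mem_filter] at hd
      exact mem_sdiff.2 ⟨hV d hd.1 l hl, hd.2 l hl⟩
    rcases ih ψ (V \ A) ⟨fun d hd => hφ.1 d (hψφ hd), fun d hd => hφ.2 d (hψφ hd)⟩ hψV with
      ⟨B, hBV, hB, hhit⟩ | hle
    · refine Or.inl ⟨A ∪ B, union_subset hAV (hBV.trans sdiff_subset), ?_, fun d hd => ?_⟩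
      · have := card_union_le A B
        rw [add_mul]
        omega
      · by_cases hdA : ∀ l ∈ d, l.1 ∉ A
        · obtain ⟨l, hl, hlB⟩ := hhit d (mem_filter.2 ⟨hd, hdA⟩)
          exact ⟨l, hl, mem_union_right _ hlB⟩
        · push Not at hdA
          obtain ⟨l, hl, hlA⟩ := hdA
          exact ⟨l, hl, mem_union_left _ hlA⟩
    · right
      -- The assignment of `A` that falsifies `c`.
      let T₀ : Finset ℕ := {v ∈ A | (v, false) ∈ c}
      have hT₀ : T₀ ∈ A.powerset := mem_powerset.2 (filter_subset _ _)
      have hzero : satOn (V \ A) (residualCnf φ A T₀) = 0 := by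
        refine satOn_eq_zero _ (mem_image.2 ⟨c, mem_filter.2 ⟨hc, ?_⟩, ?_⟩)
        · rintro ⟨⟨v, b⟩, hl, hlA, hs⟩
          have hv := hφ.1 c hc v
          cases b <;> simp_all [litSat, T₀]
        · exact filter_false_of_mem fun l hl h => h (mem_clauseVars hl)
      have hT : ∀ T, satOn (V \ A) (residualCnf φ A T) ≤ (1 - (1 / 2) ^ k) ^ m := by
        refine fun T => le_trans (satOn_mono _ fun S _ hS d hd => ?_) hle
        rw [mem_filter] at hd
        have hd' : d ∈ residualCnf φ A T := by
          refine mem_image.2 ⟨d, mem_filter.2 ⟨hd.1, ?_⟩, filter_true_of_mem hd.2⟩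
          rintro ⟨l, hl, hlA, _⟩
          exact hd.2 l hl hlA
        exact hS d hd'
      have hr : (0 : ℝ) ≤ (1 - (1 / 2) ^ k) ^ m :=
        pow_nonneg (sub_nonneg.2 (pow_le_one₀ (by norm_num) (by norm_num))) _
      have key : satOn V φ * 2 ^ #A ≤ (2 ^ #A - 1) * (1 - (1 / 2) ^ k) ^ m := by
        rw [satOn_mul_two_pow hAV, ← add_sum_erase _ _ hT₀, hzero, zero_add]
        refine (sum_le_card_nsmul _ _ _ fun T _ => hT T).trans_eq ?_
        rw [card_erase_of_mem hT₀, card_powerset, nsmul_eq_mul, Nat.cast_sub Nat.one_le_two_pow]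
        push_cast
        rfl
      have h2 : satOn V φ ≤ (1 - (1 / 2) ^ #A) * (1 - (1 / 2) ^ k) ^ m := by
        rw [← mul_le_mul_iff_left₀ (show (0 : ℝ) < 2 ^ #A by positivity)]
        refine key.trans_eq ?_
        have : (1 / 2 : ℝ) ^ #A * 2 ^ #A = 1 := by rw [← mul_pow]; norm_num
        linear_combination (1 - (1 / 2 : ℝ) ^ k) ^ m * this
      rw [pow_succ']
      refine h2.trans (mul_le_mul_of_nonneg_right ?_ hr)
      exact sub_le_sub_left (pow_le_pow_of_le_one (by norm_num) (by norm_num) hAk) _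

/-! ### Well-ordering of the falsification probabilities -/

/-- The falsification probabilities `1 - σ(φ)` of `k`CNF formulas. The variable set may be any
superset of `cnfVars φ`, which leaves the probabilities unchanged and allows the law of total
probability to be applied without adjusting variable sets. -/
def falsSpectrum (k : ℕ) : Set ℝ :=
  {x | ∃ (V : Finset ℕ) (φ : PCnf), IsKCnf k φ ∧ cnfVars φ ⊆ V ∧ x = 1 - satOn V φ}

lemma falsSpectrum_zero : falsSpectrum 0 ⊆ {0, 1} := by
  rintro x ⟨V, φ, hφ, -, rfl⟩
  rcases φ.eq_empty_or_nonempty with rfl | ⟨c, hc⟩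
  · left
    simp [satOn, cnfSat]
  · right
    have : c = ∅ := card_eq_zero.1 (Nat.le_zero.1 (hφ.2 c hc))
    simp [satOn_eq_zero V (this ▸ hc)]

/-- Below any `b < 1`, a falsification probability of a `(k+1)`CNF formula is, up to a fixed
factor, a sum of falsification probabilities of `k`CNF formulas. -/
lemma falsSpectrum_succ (k : ℕ) {b : ℝ} (hb : b < 1) : ∃ N : ℕ, ∀ x ∈ falsSpectrum (k + 1),
    x ≤ b → x * 2 ^ N ∈ AddSubmonoid.closure (falsSpectrum k) := by
  obtain ⟨m, hm⟩ := exists_pow_lt_of_lt_one (sub_pos.2 hb)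
    (show (1 - (1 / 2) ^ (k + 1) : ℝ) < 1 from sub_lt_self _ (by positivity))
  refine ⟨m * (k + 1), ?_⟩
  rintro x ⟨V, φ, hφ, hV, rfl⟩ hx
  rcases exists_hitting_or_satOn_le (k + 1) m φ V hφ hV with ⟨A, hAV, hA, hhit⟩ | hle
  · have hsum : (1 - satOn V φ) * 2 ^ (m * (k + 1)) = 2 ^ (m * (k + 1) - #A) •
        ∑ T ∈ A.powerset, (1 - satOn (V \ A) (residualCnf φ A T)) := by
      rw [sum_sub_distrib, ← satOn_mul_two_pow hAV, sum_const, card_powerset, nsmul_eq_mul,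
        nsmul_eq_mul, ← Nat.sub_add_cancel hA, pow_add, Nat.add_sub_cancel]
      push_cast
      ring
    rw [hsum]
    have hres : ∀ T, 1 - satOn (V \ A) (residualCnf φ A T) ∈ falsSpectrum k := fun T =>
      ⟨_, _, hφ.residualCnf_of_hits hhit T, cnfVars_residual_subset hV, rfl⟩
    exact nsmul_mem (sum_mem fun T _ => AddSubmonoid.subset_closure (hres T)) _
  · linarith

lemma falsSpectrum_isPWO (k : ℕ) : (falsSpectrum k).IsPWO := by
  induction k with
  | zero => exact (Set.toFinite _).isPWO.mono falsSpectrum_zero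
  | succ k ih =>
    have hcl : (AddSubmonoid.closure (falsSpectrum k) : Set ℝ).IsPWO :=
      Set.IsPWO.addSubmonoid_closure
        (by rintro x ⟨V, φ, -, -, rfl⟩; exact sub_nonneg.2 (satOn_le_one V φ)) ih
    rw [Set.IsPWO, Set.PartiallyWellOrderedOn]
    intro g
    let f : ℕ → ℝ := fun n => g n
    have hf : ∀ n, f n ∈ falsSpectrum (k + 1) := fun n => (g n).2
    have hle : ∀ n, f n ≤ 1 := by
      intro n
      obtain ⟨V, φ, -, -, h⟩ := hf n
      rw [h]
      linarith [satOn_nonneg V φ]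
    by_contra! hcon'
    have hcon : ∀ m n, m < n → f n < f m := fun m n h => lt_of_not_ge (hcon' m n h)
    have hb : f 1 < 1 := (hcon 0 1 one_pos).trans_le (hle 0)
    obtain ⟨N, hN⟩ := falsSpectrum_succ k hb
    obtain ⟨m, n, hmn, h⟩ := hcl fun n =>
      Subtype.mk (f (n + 2) * 2 ^ N) (hN _ (hf _) (hcon 1 (n + 2) (by omega)).le)
    have := hcon (m + 2) (n + 2) (by omega)
    exact absurd (le_of_mul_le_mul_right h (by positivity)) this.not_ge

/-- There is a positive spectral gap below every `δ ∈ [0,1]`: some open interval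
`(δ - ε, δ)` contains no element of the `k`CNF spectrum. -/
theorem spectral_gap_pos (k : ℕ) (δ : ℝ) (h0 : 0 ≤ δ) (h1 : δ ≤ 1) :
    ∃ ε > (0 : ℝ), Set.Ioo (δ - ε) δ ∩ kcnfSpectrum k = ∅ := by
  have hmem : ∀ x ∈ kcnfSpectrum k, 1 - x ∈ falsSpectrum k := by
    rintro x ⟨φ, hφ, rfl⟩
    exact ⟨_, φ, hφ, subset_rfl, rfl⟩
  have hwf : (falsSpectrum k ∩ Set.Ioi (1 - δ)).IsWF :=
    ((falsSpectrum_isPWO k).mono Set.inter_subset_left).isWF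
  rcases (falsSpectrum k ∩ Set.Ioi (1 - δ)).eq_empty_or_nonempty with he | hne
  · refine ⟨1, one_pos, Set.eq_empty_of_forall_notMem fun x ⟨hx, hxk⟩ => ?_⟩
    exact he.subset ⟨hmem x hxk, sub_lt_sub_left hx.2 1⟩
  · refine ⟨hwf.min hne - (1 - δ), sub_pos.2 (hwf.min_mem hne).2,
      Set.eq_empty_of_forall_notMem fun x ⟨hx, hxk⟩ => ?_⟩
    have := hwf.min_le hne ⟨hmem x hxk, sub_lt_sub_left hx.2 1⟩
    linarith [hx.1]
end

section
/- Let k ∈ ℕ and let Φ be a nonempty set of kCNF formulas. Then inf{σ(φ) : φ ∈ Φ} belongs to kcnfs-σ-spectrum, i.e., there is a kCNF formula κ with σ(κ) = inf{σ(φ) : φ ∈ Φ}. -/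
/-!
Take `φ i ∈ Φ` with `satProb (φ i)` tending to the infimum, and fix a nonprincipal ultrafilter
`U` on `ℕ`. The formulas are modified, changing their satisfaction probabilities by an amount
tending to `0` along `U`, until they all live on one fixed finite set of variables. Then only
finitely many formulas are left, so along `U` they are eventually equal to a single `κ`, and
`satProb κ` is the limit.

The modification increases a parameter `t`: every clause should either lie on the variables
below some fixed `N`, or have at least `t` literals there (`Shape`). For `t = k + 1` the second
alternative is impossible. To go from `t` to `t + 1` (`shape_step`), sort the clauses by their
trace `T`, the part below `N`; there are finitely many possible traces. For each `T`, the
remainders of the clauses with trace `T` either admit, for `U`-almost all `i`, a hitting set of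
variables whose size does not depend on `i`, or contain arbitrarily many variable-disjoint
clauses (`hitting_or_small`). In the second case almost no assignment satisfies all remainders,
so replacing all these clauses by `T` changes the probability by `o(1)`
(`satProb_le_collapse`). In the first case, rename variables so that the hitting set comes to
lie directly behind `N`, and enlarge `N` (`exists_shape`): every clause with trace `T` gains a
literal in the initial segment.
-/

open Finset

open scoped Classical

/-! ### Satisfaction probabilities -/

lemma mem_cnfVars {φ : PCnf} {v : ℕ} : v ∈ cnfVars φ ↔ ∃ c ∈ φ, ∃ l ∈ c, l.1 = v := by
  simp [cnfVars, clauseVars, Finset.mem_sup]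

lemma cnfVars_union (φ ψ : PCnf) : cnfVars (φ ∪ ψ) = cnfVars φ ∪ cnfVars ψ := by
  simp [cnfVars, Finset.sup_union]

lemma cnfSat_congr {φ : PCnf} {S S' : Finset ℕ} (h : ∀ v ∈ cnfVars φ, (v ∈ S ↔ v ∈ S')) :
    cnfSat S φ ↔ cnfSat S' φ := by
  refine forall₂_congr fun c hc => exists_congr fun l => and_congr_right fun hl => ?_
  have := h l.1 (mem_cnfVars.2 ⟨c, hc, l, hl, rfl⟩)
  unfold litSat
  split_ifs <;> simp [this]

lemma cnfSat_union {φ ψ : PCnf} {S : Finset ℕ} :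
    cnfSat S (φ ∪ ψ) ↔ cnfSat S φ ∧ cnfSat S ψ := by
  simp only [cnfSat, Finset.mem_union, or_imp, forall_and]

/-- The number of satisfying assignments of `φ` over the variable set `V`, which may differ
from `cnfVars φ`. -/
noncomputable def satCount (V : Finset ℕ) (φ : PCnf) : ℕ :=
  (V.powerset.filter (fun S => cnfSat S φ)).card

lemma satCount_empty (V : Finset ℕ) : satCount V ∅ = 2 ^ V.card := by
  simp [satCount, cnfSat]

lemma satCount_mul {A B : Finset ℕ} (hAB : Disjoint A B) {φ ψ : PCnf}
    (hφ : cnfVars φ ⊆ A) (hψ : cnfVars ψ ⊆ B) :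
    satCount (A ∪ B) (φ ∪ ψ) = satCount A φ * satCount B ψ := by
  have hd : ∀ v, v ∈ A → v ∉ B := fun v hA hB => Finset.disjoint_left.1 hAB hA hB
  unfold satCount
  rw [← Finset.card_product]
  symm
  refine Finset.card_nbij' (fun p => p.1 ∪ p.2) (fun S => (S ∩ A, S ∩ B)) ?_ ?_ ?_ ?_
  · rintro ⟨S, T⟩ h
    simp only [Finset.coe_product, Finset.coe_filter, Finset.mem_powerset, Set.mem_prod,
      Set.mem_ofPred_eq] at h ⊢
    obtain ⟨⟨hS, hS'⟩, hT, hT'⟩ := h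
    refine ⟨Finset.union_subset_union hS hT, cnfSat_union.2 ⟨?_, ?_⟩⟩
    · refine (cnfSat_congr fun v hv => ?_).1 hS'
      have := hd v (hφ hv)
      have := @hT v
      simp only [Finset.mem_union]; tauto
    · refine (cnfSat_congr fun v hv => ?_).1 hT'
      have := hd v
      have := hψ hv
      have := @hS v
      simp only [Finset.mem_union]; tauto
  · intro S h
    simp only [Finset.coe_product, Finset.coe_filter, Finset.mem_powerset, Set.mem_prod,
      Set.mem_ofPred_eq] at h ⊢
    obtain ⟨hS, hS'⟩ := h
    rw [cnfSat_union] at hS'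
    refine ⟨⟨Finset.inter_subset_right, (cnfSat_congr fun v hv => ?_).1 hS'.1⟩,
      Finset.inter_subset_right, (cnfSat_congr fun v hv => ?_).1 hS'.2⟩
    · simp [hφ hv]
    · simp [hψ hv]
  · rintro ⟨S, T⟩ h
    simp only [Finset.coe_product, Finset.coe_filter, Finset.mem_powerset, Set.mem_prod,
      Set.mem_ofPred_eq] at h
    obtain ⟨⟨hS, -⟩, hT, -⟩ := h
    ext v
    · have := @hS v; have := @hT v; have := hd v
      simp only [Finset.mem_inter, Finset.mem_union]; tauto
    · have := @hS v; have := @hT v; have := hd v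
      simp only [Finset.mem_inter, Finset.mem_union]; tauto
  · intro S h
    simp only [Finset.coe_filter, Finset.mem_powerset, Set.mem_ofPred_eq] at h
    ext v
    have := @h.1 v
    simp only [Finset.mem_inter, Finset.mem_union] at this ⊢; tauto

lemma satProb_eq {V : Finset ℕ} {φ : PCnf} (h : cnfVars φ ⊆ V) :
    satProb φ = satCount V φ / 2 ^ V.card := by
  have h1 : satCount V φ = satCount (cnfVars φ) φ * satCount (V \ cnfVars φ) ∅ := by
    rw [← satCount_mul Finset.disjoint_sdiff subset_rfl (by simp [cnfVars])]
    simp [Finset.union_sdiff_of_subset h]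
  have h2 : V.card = (cnfVars φ).card + (V \ cnfVars φ).card := by
    have := Finset.card_sdiff_add_card_eq_card h
    omega
  rw [h1, satCount_empty, h2, pow_add]
  push_cast
  rw [mul_div_mul_right _ _ (by positivity)]
  rfl

lemma satProb_nonneg (φ : PCnf) : 0 ≤ satProb φ := by unfold satProb; positivity

lemma satProb_union {φ ψ : PCnf} (h : Disjoint (cnfVars φ) (cnfVars ψ)) :
    satProb (φ ∪ ψ) = satProb φ * satProb ψ := by
  rw [satProb_eq (cnfVars_union φ ψ).subset, satCount_mul h subset_rfl subset_rfl,
    Finset.card_union_of_disjoint h, satProb_eq (φ := φ) subset_rfl,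
    satProb_eq (φ := ψ) subset_rfl, pow_add, div_mul_div_comm]
  push_cast; rfl

/-- The union bound. -/
lemma satProb_le_add_sum {ι : Type*} (I : Finset ι) (L : ι → PCnf) {φ ψ : PCnf}
    (h : ∀ S, cnfSat S φ → cnfSat S ψ ∨ ∃ i ∈ I, cnfSat S (L i)) :
    satProb φ ≤ satProb ψ + ∑ i ∈ I, satProb (L i) := by
  set V := cnfVars φ ∪ cnfVars ψ ∪ I.biUnion fun i => cnfVars (L i) with hV
  have hi : ∀ i ∈ I, satProb (L i) = satCount V (L i) / 2 ^ V.card := fun i hi =>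
    satProb_eq ((Finset.subset_biUnion_of_mem (fun i => cnfVars (L i)) hi).trans
      Finset.subset_union_right)
  rw [satProb_eq (V := V) (φ := φ) (Finset.subset_union_left.trans Finset.subset_union_left),
    satProb_eq (V := V) (φ := ψ) (Finset.subset_union_right.trans Finset.subset_union_left),
    Finset.sum_congr rfl hi, ← Finset.sum_div, ← add_div]
  gcongr
  have : satCount V φ ≤ satCount V ψ + ∑ i ∈ I, satCount V (L i) := by
    unfold satCount
    refine le_trans (Finset.card_le_card (t := V.powerset.filter (fun S => cnfSat S ψ) ∪
      I.biUnion fun i => V.powerset.filter (fun S => cnfSat S (L i))) ?_)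
      ((Finset.card_union_le _ _).trans (Nat.add_le_add_left Finset.card_biUnion_le _))
    intro S hS
    simp only [Finset.mem_filter, Finset.mem_union, Finset.mem_biUnion] at hS ⊢
    rcases h S hS.2 with h | ⟨i, hi, h⟩
    · exact Or.inl ⟨hS.1, h⟩
    · exact Or.inr ⟨i, hi, hS.1, h⟩
  exact_mod_cast this

lemma satProb_mono {φ ψ : PCnf} (h : ∀ S, cnfSat S φ → cnfSat S ψ) :
    satProb φ ≤ satProb ψ := by
  simpa using satProb_le_add_sum (∅ : Finset ℕ) (fun _ => ∅) (fun S hS => Or.inl (h S hS))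

lemma satProb_le_one (φ : PCnf) : satProb φ ≤ 1 := by
  have : satProb ∅ = 1 := by simp [satProb, cnfSat, cnfVars]
  exact this ▸ satProb_mono (ψ := ∅) (fun S _ => by simp [cnfSat])

lemma satProb_singleton_le {k : ℕ} {c : PClause} (hv : clauseValid c) (hc : c.card ≤ k) :
    satProb {c} ≤ 1 - (1 / 2) ^ k := by
  have hV : cnfVars {c} = clauseVars c := by simp [cnfVars]
  have hcard : (clauseVars c).card ≤ k := Finset.card_image_le.trans hc
  -- the assignment making every literal of `c` false
  set F : Finset ℕ := (c.filter fun l => l.2 = false).image Prod.fst with hF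
  have hFV : F ∈ (clauseVars c).powerset :=
    Finset.mem_powerset.2 (Finset.image_subset_image (Finset.filter_subset _ _))
  have hns : ¬ cnfSat F {c} := by
    intro h
    obtain ⟨⟨v, b⟩, hl, hs⟩ := h c (Finset.mem_singleton_self c)
    cases b
    · refine (show v ∉ F by simpa [litSat] using hs) ?_
      simpa [hF] using hl
    · have : v ∈ F := by simpa [litSat] using hs
      exact hv v ⟨hl, by simpa [hF] using this⟩
  have hlt : satCount (clauseVars c) {c} + 1 ≤ 2 ^ (clauseVars c).card := by
    rw [← Finset.card_powerset]
    refine Finset.card_lt_card (Finset.filter_ssubset.2 ⟨F, hFV, hns⟩)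
  have hlt' : (satCount (clauseVars c) {c} : ℝ) + 1 ≤ 2 ^ (clauseVars c).card := by
    exact_mod_cast hlt
  rw [satProb_eq hV.subset]
  have h1 : ((1 : ℝ) / 2) ^ k ≤ (1 / 2) ^ (clauseVars c).card :=
    pow_le_pow_of_le_one (by norm_num) (by norm_num) hcard
  have h2 : (satCount (clauseVars c) {c} : ℝ) / 2 ^ (clauseVars c).card
      ≤ 1 - (1 / 2) ^ (clauseVars c).card := by
    rw [div_le_iff₀ (by positivity), sub_mul, ← mul_pow]
    norm_num
    linarith
  linarith

/-! ### Renaming of variables -/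

/-- The clause obtained by renaming every variable `v` to `e v`. -/
def renameClause (e : Equiv.Perm ℕ) (c : PClause) : PClause := c.image fun l => (e l.1, l.2)

/-- The formula obtained by renaming every variable `v` to `e v`. -/
def rename (e : Equiv.Perm ℕ) (φ : PCnf) : PCnf := φ.image (renameClause e)

lemma rename_injective (e : Equiv.Perm ℕ) :
    Function.Injective fun l : PLit => ((e l.1, l.2) : PLit) := by
  rintro ⟨a, b⟩ ⟨c, d⟩ h
  simpa using h

lemma cnfSat_rename (e : Equiv.Perm ℕ) (φ : PCnf) (S : Finset ℕ) :
    cnfSat (S.image e) (rename e φ) ↔ cnfSat S φ := by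
  have hl : ∀ l : PLit, litSat (S.image e) (e l.1, l.2) ↔ litSat S l := by
    intro l; simp [litSat]
  simp only [cnfSat, rename, Finset.forall_mem_image, clauseSat, renameClause,
    Finset.exists_mem_image, hl]

lemma cnfVars_rename (e : Equiv.Perm ℕ) (φ : PCnf) :
    cnfVars (rename e φ) = (cnfVars φ).image e := by
  ext v
  simp only [mem_cnfVars, rename, renameClause, Finset.mem_image]
  constructor
  · rintro ⟨_, ⟨c, hc, rfl⟩, l, hl, rfl⟩
    obtain ⟨x, hx, rfl⟩ := Finset.mem_image.1 hl
    exact ⟨x.1, ⟨c, hc, x, hx, rfl⟩, rfl⟩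
  · rintro ⟨_, ⟨c, hc, l, hl, rfl⟩, rfl⟩
    exact ⟨_, ⟨c, hc, rfl⟩, _, Finset.mem_image_of_mem _ hl, rfl⟩

lemma satProb_rename (e : Equiv.Perm ℕ) (φ : PCnf) : satProb (rename e φ) = satProb φ := by
  unfold satProb
  rw [cnfVars_rename, Finset.card_image_of_injective _ e.injective, Finset.powerset_image,
    Finset.filter_image, Finset.card_image_of_injective _ (Finset.image_injective e.injective)]
  simp only [cnfSat_rename]

lemma IsKCnf.rename {k : ℕ} {φ : PCnf} (h : IsKCnf k φ) (e : Equiv.Perm ℕ) :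
    IsKCnf k (rename e φ) := by
  constructor
  · intro c hc
    obtain ⟨d, hd, rfl⟩ := Finset.mem_image.1 hc
    rintro v ⟨h1, h2⟩
    refine h.1 d hd (e.symm v) ⟨?_, ?_⟩
    · obtain ⟨⟨a, b⟩, hl, he⟩ := Finset.mem_image.1 h1
      simp only [Prod.mk.injEq] at he
      obtain ⟨rfl, rfl⟩ := he
      simpa using hl
    · obtain ⟨⟨a, b⟩, hl, he⟩ := Finset.mem_image.1 h2
      simp only [Prod.mk.injEq] at he
      obtain ⟨rfl, rfl⟩ := he
      simpa using hl
  · intro c hc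
    obtain ⟨d, hd, rfl⟩ := Finset.mem_image.1 hc
    exact Finset.card_image_le.trans (h.2 d hd)

/-- Any `m` variables can be moved below `N + m` without touching those below `N`. -/
lemma exists_perm (N : ℕ) (W : Finset ℕ) :
    ∃ e : Equiv.Perm ℕ, (∀ v < N, e v = v) ∧ ∀ v ∈ W, e v < N + W.card := by
  induction W using Finset.induction_on with
  | empty => exact ⟨1, by simp, by simp⟩
  | insert a W ha ih =>
    obtain ⟨e, he, hW⟩ := ih
    rw [Finset.card_insert_of_notMem ha]
    by_cases h : e a < N + W.card
    · refine ⟨e, he, fun v hv => ?_⟩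
      rcases Finset.mem_insert.1 hv with rfl | hv
      · omega
      · have := hW v hv; omega
    · have hfix : ∀ v, e v < N + W.card → Equiv.swap (e a) (N + W.card) (e v) = e v :=
        fun v hv => Equiv.swap_apply_of_ne_of_ne (by omega) (by omega)
      refine ⟨e.trans (Equiv.swap (e a) (N + W.card)), fun v hv => ?_, fun v hv => ?_⟩
      · have := he v hv
        rw [Equiv.trans_apply, hfix v (by omega), this]
      · rw [Equiv.trans_apply]
        rcases Finset.mem_insert.1 hv with rfl | hv
        · rw [Equiv.swap_apply_left]; omega
        · have := hW v hv
          rw [hfix v this]; omega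

/-! ### Small hitting sets or small satisfaction probability -/

/-- Greedily collecting variable-disjoint clauses either gets stuck, and then the variables
collected so far meet every clause, or produces `s` independent clauses. An empty clause in
`L` is met by no set, in accordance with `satProb L = 0`. -/
lemma hitting_or_small {k : ℕ} {L : PCnf} (hL : IsKCnf k L) (s : ℕ) :
    (∃ W : Finset ℕ, W.card ≤ k * s ∧ ∀ c ∈ L, ∃ l ∈ c, l.1 ∈ W) ∨
      satProb L ≤ (1 - (1 / 2) ^ k) ^ s := by
  have key : (∃ W : Finset ℕ, W.card ≤ k * s ∧ ∀ c ∈ L, ∃ l ∈ c, l.1 ∈ W) ∨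
      ∃ M ⊆ L, (cnfVars M).card ≤ k * s ∧ satProb M ≤ (1 - (1 / 2) ^ k) ^ s := by
    induction s with
    | zero => exact Or.inr ⟨∅, by simp, by simp [cnfVars], by simpa using satProb_le_one ∅⟩
    | succ s ih =>
      rcases ih with ⟨W, hW, h⟩ | ⟨M, hML, hM, hp⟩
      · exact Or.inl ⟨W, hW.trans (Nat.mul_le_mul_left _ (Nat.le_succ s)), h⟩
      by_cases hh : ∀ c ∈ L, ∃ l ∈ c, l.1 ∈ cnfVars M
      · exact Or.inl ⟨_, hM.trans (Nat.mul_le_mul_left _ (Nat.le_succ s)), hh⟩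
      push Not at hh
      obtain ⟨c, hc, hcM⟩ := hh
      have hcv : cnfVars {c} = clauseVars c := by simp [cnfVars]
      refine Or.inr ⟨M ∪ {c}, Finset.union_subset hML (by simpa using hc), ?_, ?_⟩
      · rw [cnfVars_union, hcv, mul_add, mul_one]
        exact (Finset.card_union_le _ _).trans
          (add_le_add hM (Finset.card_image_le.trans (hL.2 c hc)))
      · rw [satProb_union, pow_succ]
        · exact mul_le_mul hp (satProb_singleton_le (hL.1 c hc) (hL.2 c hc))
            (satProb_nonneg _) ((satProb_nonneg _).trans hp)
        · rw [hcv, Finset.disjoint_right]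
          intro v hv
          obtain ⟨l, hl, rfl⟩ := Finset.mem_image.1 hv
          exact hcM l hl
  refine key.imp_right ?_
  rintro ⟨M, hML, -, hp⟩
  exact (satProb_mono fun S hS c hc => hS c (hML hc)).trans hp

/-! ### Collapsing traces -/

/-- The part of the clause `c` on the variables below `N`. -/
def trace (N : ℕ) (c : PClause) : PClause := c.filter fun l => l.1 < N

/-- The remainders, on the variables from `N` on, of the clauses of `φ` with trace exactly `T`.
If `T ∈ φ` lies entirely below `N`, then the empty clause is one of them. -/
noncomputable def traceLink (φ : PCnf) (N : ℕ) (T : PClause) : PCnf :=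
  (φ.filter fun c => trace N c = T).image fun c => c.filter fun l => N ≤ l.1

/-- Replace all clauses of `φ` whose trace is some `T ∈ 𝒯` by `T` itself; every `T ∈ 𝒯` is
added, whether or not it occurs as a trace. -/
noncomputable def collapse (φ : PCnf) (N : ℕ) (𝒯 : Finset PClause) : PCnf :=
  (φ.filter fun c => trace N c ∉ 𝒯) ∪ 𝒯

lemma clauseValid_mono {c d : PClause} (h : c ⊆ d) (hd : clauseValid d) : clauseValid c :=
  fun v hv => hd v ⟨h hv.1, h hv.2⟩

lemma IsKCnf.traceLink {k : ℕ} {φ : PCnf} (h : IsKCnf k φ) (N : ℕ) (T : PClause) :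
    IsKCnf k (traceLink φ N T) := by
  constructor
  · intro c hc
    obtain ⟨d, hd, rfl⟩ := Finset.mem_image.1 hc
    exact clauseValid_mono (Finset.filter_subset _ _) (h.1 d (Finset.mem_filter.1 hd).1)
  · intro c hc
    obtain ⟨d, hd, rfl⟩ := Finset.mem_image.1 hc
    exact (Finset.card_filter_le _ _).trans (h.2 d (Finset.mem_filter.1 hd).1)

lemma satProb_collapse_le (φ : PCnf) (N : ℕ) (𝒯 : Finset PClause) :
    satProb (collapse φ N 𝒯) ≤ satProb φ := by
  refine satProb_mono fun S hS c hc => ?_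
  by_cases h : trace N c ∈ 𝒯
  · obtain ⟨l, hl, hs⟩ := hS _ (Finset.mem_union_right _ h)
    exact ⟨l, (Finset.mem_filter.1 hl).1, hs⟩
  · exact hS c (Finset.mem_union_left _ (Finset.mem_filter.2 ⟨hc, h⟩))

/-- An assignment satisfying `φ` but falsifying some `T ∈ 𝒯` must satisfy the remainders of all
clauses with trace `T`. -/
lemma satProb_le_collapse (φ : PCnf) (N : ℕ) (𝒯 : Finset PClause) :
    satProb φ ≤ satProb (collapse φ N 𝒯) + ∑ T ∈ 𝒯, satProb (traceLink φ N T) := by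
  refine satProb_le_add_sum 𝒯 (traceLink φ N) fun S hS => ?_
  by_cases h : ∀ T ∈ 𝒯, clauseSat S T
  · left
    intro c hc
    rcases Finset.mem_union.1 hc with hc | hc
    · exact hS c (Finset.mem_filter.1 hc).1
    · exact h c hc
  · right
    push Not at h
    obtain ⟨T, hT, hns⟩ := h
    refine ⟨T, hT, fun c hc => ?_⟩
    obtain ⟨d, hd, rfl⟩ := Finset.mem_image.1 hc
    obtain ⟨hdφ, rfl⟩ := Finset.mem_filter.1 hd
    obtain ⟨l, hl, hs⟩ := hS d hdφ
    refine ⟨l, Finset.mem_filter.2 ⟨hl, ?_⟩, hs⟩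
    by_contra hlt
    exact hns ⟨l, Finset.mem_filter.2 ⟨hl, not_le.1 hlt⟩, hs⟩

/-- All literals over the variables below `N`. -/
def lits (N : ℕ) : Finset PLit := Finset.range N ×ˢ Finset.univ

lemma mem_lits {N : ℕ} {l : PLit} : l ∈ lits N ↔ l.1 < N := by simp [lits]

/-- A `k`CNF formula each clause of which lies below `N` or has at least `t` literals there. -/
def Shape (k N t : ℕ) (φ : PCnf) : Prop :=
  IsKCnf k φ ∧ ∀ c ∈ φ, c ⊆ lits N ∨ t ≤ (trace N c).card

/-- If hitting sets of size at most `m` are available for all traces outside `𝒯`, then the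
hit clauses gain a literal in the initial segment once the hitting variables are moved there. -/
lemma exists_shape {k N t m : ℕ} {φ : PCnf} (hφ : Shape k N t φ) {𝒯 : Finset PClause}
    (h𝒯 : ∀ T ∈ 𝒯, T ⊆ lits N) (h𝒯k : IsKCnf k 𝒯) {W : Finset ℕ} (hW : W.card ≤ m)
    (hhit : ∀ c ∈ φ, trace N c ∉ 𝒯 → ∃ l ∈ c, N ≤ l.1 ∧ l.1 ∈ W) :
    ∃ ψ, Shape k (N + m) (t + 1) ψ ∧ satProb ψ = satProb (collapse φ N 𝒯) := by
  obtain ⟨e, he, heW⟩ := exists_perm N W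
  have hk : IsKCnf k (collapse φ N 𝒯) := by
    constructor
    · intro c hc
      rcases Finset.mem_union.1 hc with hc | hc
      · exact hφ.1.1 c (Finset.mem_filter.1 hc).1
      · exact h𝒯k.1 c hc
    · intro c hc
      rcases Finset.mem_union.1 hc with hc | hc
      · exact hφ.1.2 c (Finset.mem_filter.1 hc).1
      · exact h𝒯k.2 c hc
  refine ⟨rename e (collapse φ N 𝒯), ⟨hk.rename e, fun c hc => ?_⟩, satProb_rename _ _⟩
  obtain ⟨d, hd, rfl⟩ := Finset.mem_image.1 hc
  rcases Finset.mem_union.1 hd with hd | hd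
  · right
    obtain ⟨hd, hT⟩ := Finset.mem_filter.1 hd
    obtain ⟨l, hl, hlN, hlW⟩ := hhit d hd hT
    -- `d` contains the literal `l`, so it does not lie below `N`
    have ht : t ≤ (trace N d).card := by
      refine (hφ.2 d hd).resolve_left fun hsub => ?_
      have := mem_lits.1 (hsub hl)
      omega
    have hl' : l ∉ trace N d := fun h => by
      have := (Finset.mem_filter.1 h).2
      omega
    have hsub : (insert l (trace N d)).image (fun l => ((e l.1, l.2) : PLit)) ⊆
        trace (N + m) (renameClause e d) := by
      intro x hx
      obtain ⟨y, hy, rfl⟩ := Finset.mem_image.1 hx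
      rcases Finset.mem_insert.1 hy with rfl | hy
      · have := heW _ hlW
        exact Finset.mem_filter.2 ⟨Finset.mem_image_of_mem _ hl, by dsimp only; omega⟩
      · obtain ⟨hy, hlt⟩ := Finset.mem_filter.1 hy
        have := he _ hlt
        exact Finset.mem_filter.2 ⟨Finset.mem_image_of_mem _ hy, by dsimp only; omega⟩
    have := Finset.card_le_card hsub
    rw [Finset.card_image_of_injective _ (rename_injective e),
      Finset.card_insert_of_notMem hl'] at this
    omega
  · left
    intro x hx
    obtain ⟨y, hy, rfl⟩ := Finset.mem_image.1 hx
    have hlt := mem_lits.1 (h𝒯 d hd hy)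
    have := he _ hlt
    exact mem_lits.2 (by dsimp only; omega)

/-! ### Compactness along an ultrafilter -/

open Filter Topology in
/-- Along an ultrafilter each trace either has bounded hitting sets, and then its clauses gain a
literal in the initial segment, or its remainders have satisfaction probability tending to `0`,
and then collapsing it changes nothing in the limit. -/
lemma shape_step {k N t : ℕ} (U : Ultrafilter ℕ) (φ : ℕ → PCnf)
    (hφ : ∀ᶠ i in U, Shape k N t (φ i)) :
    ∃ (N' : ℕ) (ψ : ℕ → PCnf), (∀ᶠ i in U, Shape k N' (t + 1) (ψ i)) ∧
      Tendsto (fun i => satProb (φ i) - satProb (ψ i)) U (𝓝 0) := by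
  set A : Finset PClause :=
    (lits N).powerset.filter fun T => clauseValid T ∧ T.card ≤ k with hA
  let Hit : ℕ → ℕ → PClause → Prop := fun s i T =>
    ∃ W : Finset ℕ, W.card ≤ k * s ∧ ∀ c ∈ traceLink (φ i) N T, ∃ l ∈ c, l.1 ∈ W
  set 𝒯 : Finset PClause := A.filter fun T => ∀ s, ¬ ∀ᶠ i in U, Hit s i T with h𝒯
  have hB : ∀ T ∈ A \ 𝒯, ∃ s, ∀ᶠ i in U, Hit s i T := by
    intro T hT
    obtain ⟨hTA, hT⟩ := Finset.mem_sdiff.1 hT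
    by_contra hcon
    exact hT (Finset.mem_filter.2 ⟨hTA, not_exists.1 hcon⟩)
  choose! s hs using hB
  have hall : ∀ᶠ i in U, ∀ T ∈ A \ 𝒯, Hit (s T) i T :=
    (Filter.eventually_all_finset (A \ 𝒯)).2 hs
  have hex : ∀ᶠ i in U, ∃ ψ, Shape k (N + ∑ T ∈ A \ 𝒯, k * s T) (t + 1) ψ ∧
      satProb ψ = satProb (collapse (φ i) N 𝒯) := by
    filter_upwards [hφ, hall] with i hi hhit
    choose! W hW hWhit using hhit
    refine exists_shape hi (𝒯 := 𝒯) (W := (A \ 𝒯).biUnion W) ?_ ⟨?_, ?_⟩ ?_ ?_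
    · intro T hT
      exact Finset.mem_powerset.1 (Finset.mem_filter.1 (Finset.mem_filter.1 hT).1).1
    · intro T hT
      exact (Finset.mem_filter.1 (Finset.mem_filter.1 hT).1).2.1
    · intro T hT
      exact (Finset.mem_filter.1 (Finset.mem_filter.1 hT).1).2.2
    · exact Finset.card_biUnion_le.trans (Finset.sum_le_sum hW)
    · intro c hc hT
      have hTB : trace N c ∈ A \ 𝒯 := by
        refine Finset.mem_sdiff.2 ⟨Finset.mem_filter.2 ⟨Finset.mem_powerset.2 ?_, ?_, ?_⟩, hT⟩
        · exact fun l hl => mem_lits.2 (Finset.mem_filter.1 hl).2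
        · exact clauseValid_mono (Finset.filter_subset _ _) (hi.1.1 c hc)
        · exact (Finset.card_filter_le _ _).trans (hi.1.2 c hc)
      obtain ⟨l, hl, hlW⟩ := hWhit _ hTB (c.filter fun l => N ≤ l.1)
        (Finset.mem_image_of_mem _ (Finset.mem_filter.2 ⟨hc, rfl⟩))
      obtain ⟨hl, hlN⟩ := Finset.mem_filter.1 hl
      exact ⟨l, hl, hlN, Finset.mem_biUnion.2 ⟨_, hTB, hlW⟩⟩
  obtain ⟨ψ, hψ⟩ := hex.choice
  refine ⟨_, ψ, hψ.mono fun i h => h.1, ?_⟩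
  have hlim : ∀ T ∈ 𝒯, Tendsto (fun i => satProb (traceLink (φ i) N T)) U (𝓝 0) := by
    intro T hT
    have hq0 : (0 : ℝ) ≤ 1 - (1 / 2) ^ k :=
      sub_nonneg.2 (pow_le_one₀ (by norm_num) (by norm_num))
    have hq1 : (1 : ℝ) - (1 / 2) ^ k < 1 := sub_lt_self _ (by positivity)
    rw [tendsto_order]
    refine ⟨fun a ha => Eventually.of_forall fun i => ha.trans_le (satProb_nonneg _),
      fun ε hε => ?_⟩
    obtain ⟨n, hn⟩ := exists_pow_lt_of_lt_one hε hq1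
    filter_upwards [hφ, Ultrafilter.eventually_not.2 ((Finset.mem_filter.1 hT).2 n)] with i hi hni
    exact ((hitting_or_small (hi.1.traceLink N T) n).resolve_left hni).trans_lt hn
  have hsum : Tendsto (fun i => ∑ T ∈ 𝒯, satProb (traceLink (φ i) N T)) U (𝓝 0) := by
    simpa using tendsto_finsetSum 𝒯 hlim
  refine squeeze_zero' (hψ.mono fun i h => ?_) (hψ.mono fun i h => ?_) hsum
  · rw [h.2]; exact sub_nonneg.2 (satProb_collapse_le _ _ _)
  · rw [h.2]; exact sub_le_iff_le_add'.2 (satProb_le_collapse _ _ _)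

open Filter Topology in
lemma exists_shape_seq {k : ℕ} (U : Ultrafilter ℕ) (φ : ℕ → PCnf) (hφ : ∀ i, IsKCnf k (φ i))
    (t : ℕ) : ∃ (N : ℕ) (ψ : ℕ → PCnf), (∀ᶠ i in U, Shape k N t (ψ i)) ∧
      Tendsto (fun i => satProb (φ i) - satProb (ψ i)) U (𝓝 0) := by
  induction t with
  | zero =>
    exact ⟨0, φ, Eventually.of_forall fun i => ⟨hφ i, fun _ _ => Or.inr (Nat.zero_le _)⟩,
      by simp⟩
  | succ t ih =>
    obtain ⟨N, ψ, hψ, hlim⟩ := ih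
    obtain ⟨N', ψ', hψ', hlim'⟩ := shape_step U ψ hψ
    exact ⟨N', ψ', hψ', by simpa using hlim.add hlim'⟩

/-- The infimum of the satisfaction probabilities of a nonempty set of `k`CNF
formulas is itself the satisfaction probability of some `k`CNF formula. -/
theorem sInf_mem_spectrum (k : ℕ) (Φ : Set PCnf) (hne : Φ.Nonempty)
    (hk : ∀ φ ∈ Φ, IsKCnf k φ) :
    ∃ κ : PCnf, IsKCnf k κ ∧ satProb κ = sInf (satProb '' Φ) := by
  obtain ⟨u, -, hu, hmem⟩ := exists_seq_tendsto_sInf (hne.image satProb)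
    ⟨0, Set.forall_mem_image.2 fun φ _ => satProb_nonneg φ⟩
  choose φ hφ hφu using hmem
  set U : Ultrafilter ℕ := Filter.hyperfilter ℕ
  -- with `t = k + 1` no clause has enough literals, so all clauses lie below `N`
  obtain ⟨N, ψ, hψ, hlim⟩ := exists_shape_seq U φ (fun i => hk _ (hφ i)) (k + 1)
  have hfin : ∀ᶠ i in U, ψ i ∈ (lits N).powerset.powerset := by
    filter_upwards [hψ] with i hi
    refine Finset.mem_powerset.2 fun c hc => Finset.mem_powerset.2 ?_
    refine (hi.2 c hc).resolve_right fun h => ?_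
    have := (Finset.card_filter_le c fun l => l.1 < N).trans (hi.1.2 c hc)
    exact absurd (h.trans this) (by omega)
  obtain ⟨κ, -, hκ⟩ : ∃ κ ∈ (lits N).powerset.powerset, {i | ψ i = κ} ∈ U := by
    refine (Ultrafilter.finite_biUnion_mem_iff
      (is := ((lits N).powerset.powerset : Set PCnf)) (Finset.finite_toSet _)).1 ?_
    filter_upwards [hfin] with i hi
    exact Set.mem_biUnion hi rfl
  have hκ' : ∀ᶠ i in (U : Filter ℕ), ψ i = κ := hκ
  obtain ⟨i, hi, hiκ⟩ := (hψ.and hκ').exists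
  refine ⟨κ, hiκ ▸ hi.1, ?_⟩
  have h1 : Filter.Tendsto (fun i => satProb (ψ i)) U (nhds (satProb κ)) :=
    tendsto_const_nhds.congr' (hκ'.mono fun i h => by simp only [h])
  have h2 := hlim.add h1
  simp only [sub_add_cancel, zero_add, hφu] at h2
  exact tendsto_nhds_unique h2 (hu.mono_left Nat.hyperfilter_le_atTop)
end
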